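/- arXiv:2208.07490 — 2 statements merged into one kernel-verified Lean document; each statement's English description precedes it below -/
import Mathlib

section
/- Let V be a real inner product space of finite dimension n ≥ 1 and let S1, S2, ψ1, ψ2 be linear endomorphisms of V with tr S1 = 0 = tr S2, tr ψ1 = tr ψ2, and S1 ≠ 0. Define Θ : V × V → ℝ⁴ by Θ(X,Y) = (⟨S1X, Y⟩, (1/√2)⟨(id + ψ1 − ψ2)X, Y⟩, ⟨S2X, Y⟩, (1/√2)⟨(id − ψ1 + ψ2)X, Y⟩). If Θ is null with respect to ⟨⟨·,·⟩⟩, then ψ1 = ψ2 and either S1 = S2 or S1 = −S2. -/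
open scoped RealInnerProductSpace

/-- The bilinear map `Θ` associated to the operators `S1, S2, ψ1, ψ2`. -/
noncomputable def Theta {V : Type*} [NormedAddCommGroup V] [InnerProductSpace ℝ V]
    (S1 S2 ψ1 ψ2 : V →ₗ[ℝ] V) (X Y : V) : Fin 4 → ℝ :=
  ![⟪S1 X, Y⟫, (1 / Real.sqrt 2) * ⟪X + ψ1 X - ψ2 X, Y⟫,
    ⟪S2 X, Y⟫, (1 / Real.sqrt 2) * ⟪X - ψ1 X + ψ2 X, Y⟫]

/-- The bilinear form of signature (2,2) on `ℝ⁴`. -/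
def bform (u v : Fin 4 → ℝ) : ℝ := u 0 * v 0 + u 1 * v 1 - u 2 * v 2 - u 3 * v 3

/-!
Put `D = ψ1 - ψ2`. By polarization, nullity of `Θ` says that
`S1 ⊗ S1 - S2 ⊗ S2 + id ⊗ D + D ⊗ id = 0`. Taking the trace of the second tensor factors leaves
`n • D = 0`, because `S1`, `S2` and `D` are traceless. What remains is `S1 ⊗ S1 = S2 ⊗ S2`, and a
decomposable symmetric tensor determines its factor up to sign.
-/

theorem eq_or_eq_neg_of_forall_mul_eq_mul {α R : Type*} [CommRing R] [NoZeroDivisors R]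
    {f g : α → R} (h : ∀ x y, f x * f y = g x * g y) : f = g ∨ f = -g := by
  by_cases hf : f = 0
  · have hg : g = 0 := funext fun x ↦ mul_self_eq_zero.mp (by simp [← h, hf])
    exact .inl (hf.trans hg.symm)
  obtain ⟨x, hx : f x ≠ 0⟩ := Function.ne_iff.mp hf
  refine (mul_self_eq_mul_self_iff.mp (h x x)).imp (fun hfg ↦ ?_) fun hfg ↦ ?_
  · exact funext fun y ↦ mul_left_cancel₀ hx (by rw [h, hfg])
  · exact funext fun y ↦ mul_left_cancel₀ hx (by rw [h, hfg, Pi.neg_apply, neg_mul_neg])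

section BilinForm

variable {R M : Type*} [CommRing R] [AddCommGroup M] [Module R M] {b : LinearMap.BilinForm R M}

theorem end_eq_zero_of_separatingLeft (hb : b.SeparatingLeft) {A : Module.End R M}
    (h : ∀ X Y, b (A X) Y = 0) : A = 0 :=
  LinearMap.ext fun X ↦ hb _ (h X)

theorem sum_trace_smul_eq_zero_of_separatingLeft (hb : b.SeparatingLeft) {ι : Type*}
    {s : Finset ι} {A C : ι → Module.End R M}
    (h : ∀ X Y Z T, ∑ i ∈ s, b (A i X) Y * b (C i Z) T = 0) :
    ∑ i ∈ s, LinearMap.trace R M (C i) • A i = 0 := by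
  have contraction (X Y : M) : ∑ i ∈ s, b (A i X) Y • C i = 0 :=
    end_eq_zero_of_separatingLeft hb fun Z T ↦ by
      simpa [LinearMap.sum_apply] using h X Y Z T
  refine end_eq_zero_of_separatingLeft hb fun X Y ↦ ?_
  simpa [LinearMap.sum_apply, mul_comm] using congrArg (LinearMap.trace R M) (contraction X Y)

theorem end_eq_or_eq_neg_of_separatingLeft [NoZeroDivisors R] (hb : b.SeparatingLeft)
    {A B : Module.End R M}
    (h : ∀ X Y Z T, b (A X) Y * b (A Z) T = b (B X) Y * b (B Z) T) : A = B ∨ A = -B := by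
  have coeff_eq := eq_or_eq_neg_of_forall_mul_eq_mul (f := fun p : M × M ↦ b (A p.1) p.2)
    (g := fun p ↦ b (B p.1) p.2) fun p q ↦ h p.1 p.2 q.1 q.2
  refine coeff_eq.imp (fun hAB ↦ ?_) fun hAB ↦ ?_
  · refine sub_eq_zero.mp (end_eq_zero_of_separatingLeft hb fun X Y ↦ ?_)
    simpa [sub_eq_zero] using congrFun hAB (X, Y)
  · refine eq_neg_of_add_eq_zero_left (end_eq_zero_of_separatingLeft hb fun X Y ↦ ?_)
    simpa [add_eq_zero_iff_eq_neg] using congrFun hAB (X, Y)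

end BilinForm

/-- A map `Θ` of two variables into `ℝ⁴` is null if all its values are isotropic and mutually
orthogonal for the form of signature (2,2). Bilinearity of `Θ` is not part of the definition. -/
def IsNullMap {α β : Type*} (Θ : α → β → Fin 4 → ℝ) : Prop :=
  ∀ X Y Z T, bform (Θ X Y) (Θ Z T) = 0

section Theta

variable {V : Type*} [NormedAddCommGroup V] [InnerProductSpace ℝ V] {S1 S2 ψ1 ψ2 : V →ₗ[ℝ] V}

theorem separatingLeft_innerₗ : (innerₗ V).SeparatingLeft :=
  fun X h ↦ inner_self_eq_zero.mp (h X)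

theorem bform_Theta (X Y Z T : V) :
    bform (Theta S1 S2 ψ1 ψ2 X Y) (Theta S1 S2 ψ1 ψ2 Z T) =
      ⟪S1 X, Y⟫ * ⟪S1 Z, T⟫ - ⟪S2 X, Y⟫ * ⟪S2 Z, T⟫
        + ⟪X, Y⟫ * ⟪(ψ1 - ψ2) Z, T⟫ + ⟪(ψ1 - ψ2) X, Y⟫ * ⟪Z, T⟫ := by
  have half : 1 / √2 * (1 / √2) = (1 / 2 : ℝ) := by
    rw [div_mul_div_comm, Real.mul_self_sqrt zero_le_two, one_mul]
  simp only [bform, Theta, Matrix.cons_val, LinearMap.sub_apply, inner_add_left, inner_sub_left]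
  linear_combination 2 * (⟪X, Y⟫ * (⟪ψ1 Z, T⟫ - ⟪ψ2 Z, T⟫)
    + (⟪ψ1 X, Y⟫ - ⟪ψ2 X, Y⟫) * ⟪Z, T⟫) * half

theorem IsNullMap.trace_contraction (hnull : IsNullMap (Theta S1 S2 ψ1 ψ2)) :
    LinearMap.trace ℝ V S1 • S1 - LinearMap.trace ℝ V S2 • S2
      + LinearMap.trace ℝ V (ψ1 - ψ2) • LinearMap.id
      + LinearMap.trace ℝ V LinearMap.id • (ψ1 - ψ2) = 0 := by
  have h := sum_trace_smul_eq_zero_of_separatingLeft (separatingLeft_innerₗ (V := V)) (s := .univ)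
    (A := ![S1, S2, LinearMap.id, ψ1 - ψ2]) (C := ![S1, -S2, ψ1 - ψ2, LinearMap.id])
    fun X Y Z T ↦ by
      simpa [Fin.sum_univ_four, bform_Theta, sub_eq_add_neg] using hnull X Y Z T
  simpa [Fin.sum_univ_four, sub_eq_add_neg] using h

theorem IsNullMap.psi_eq [FiniteDimensional ℝ V] (hnull : IsNullMap (Theta S1 S2 ψ1 ψ2))
    (htr1 : LinearMap.trace ℝ V S1 = 0) (htr2 : LinearMap.trace ℝ V S2 = 0)
    (htrψ : LinearMap.trace ℝ V ψ1 = LinearMap.trace ℝ V ψ2) :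
    ψ1 = ψ2 := by
  cases subsingleton_or_nontrivial V
  · exact Subsingleton.elim _ _
  have h : (Module.finrank ℝ V : ℝ) • (ψ1 - ψ2) = 0 := by
    simpa [htr1, htr2, htrψ] using hnull.trace_contraction
  have hdim : (Module.finrank ℝ V : ℝ) ≠ 0 := Nat.cast_ne_zero.mpr Module.finrank_pos.ne'
  exact sub_eq_zero.mp ((smul_eq_zero_iff_right hdim).mp h)

theorem IsNullMap.eq_or_eq_neg {ψ : V →ₗ[ℝ] V} (hnull : IsNullMap (Theta S1 S2 ψ ψ)) :
    S1 = S2 ∨ S1 = -S2 :=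
  end_eq_or_eq_neg_of_separatingLeft separatingLeft_innerₗ fun X Y Z T ↦ by
    simpa [bform_Theta, sub_eq_zero] using hnull X Y Z T

end Theta

theorem theta_null_implies_congruent {V : Type*} [NormedAddCommGroup V]
    [InnerProductSpace ℝ V] [FiniteDimensional ℝ V]
    (hn : 1 ≤ Module.finrank ℝ V) (S1 S2 ψ1 ψ2 : V →ₗ[ℝ] V)
    (htr1 : LinearMap.trace ℝ V S1 = 0) (htr2 : LinearMap.trace ℝ V S2 = 0)
    (htrψ : LinearMap.trace ℝ V ψ1 = LinearMap.trace ℝ V ψ2)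
    (hS1 : S1 ≠ 0)
    (hnull : ∀ X Y Z T : V,
      bform (Theta S1 S2 ψ1 ψ2 X Y) (Theta S1 S2 ψ1 ψ2 Z T) = 0) :
    ψ1 = ψ2 ∧ (S1 = S2 ∨ S1 = -S2) := by
  have null : IsNullMap (Theta S1 S2 ψ1 ψ2) := hnull
  obtain rfl := null.psi_eq htr1 htr2 htrψ
  exact ⟨rfl, null.eq_or_eq_neg⟩
end

section
/- Let V be a 2-dimensional real inner product space, let S be a self-adjoint endomorphism of V with S ≠ 0 and tr S = 0, and let J be an endomorphism of V with J ∘ J = −id. If S ∘ J is self-adjoint and tr(S ∘ J) = 0, then J is a linear isometry of V, i.e., ⟨JX, JY⟩ = ⟨X, Y⟩ for all X, Y ∈ V (so J acts as a rotation through an angle π/2 on V). -/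
open scoped RealInnerProductSpace

/-! By Cayley–Hamilton, a traceless endomorphism `T` of a plane satisfies `T² = -det T`, so if it is
also symmetric then `⟪T X, T Y⟫ = -det T * ⟪X, Y⟫`. Applying this to `S` at `J X`, `J Y` and to
`S ∘ J` at `X`, `Y` computes `⟪S J X, S J Y⟫` in two ways; cancelling `det S` leaves
`⟪J X, J Y⟫ = det J * ⟪X, Y⟫`. If `J² = -1` over `ℝ`, then `tr J = 0`, since
otherwise Cayley–Hamilton makes `J` a scalar with square `-1`. Hence `det J = -J² = 1`. -/

section CayleyHamilton

open Polynomial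

theorem charpoly_of_finrank_eq_two {R M : Type*} [CommRing R] [Nontrivial R] [AddCommGroup M]
    [Module R M] [Module.Free R M] [Module.Finite R M] (hdim : Module.finrank R M = 2)
    (f : M →ₗ[R] M) :
    f.charpoly = X ^ 2 - C (LinearMap.trace R M f) * X + C (LinearMap.det f) := by
  let b := Module.finBasisOfFinrankEq R M hdim
  rw [← f.charpoly_toMatrix b, Matrix.charpoly_fin_two, ← LinearMap.trace_eq_matrix_trace,
    LinearMap.det_toMatrix]

theorem comp_self_eq_trace_smul_sub_det_smul_id {R M : Type*} [CommRing R] [Nontrivial R]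
    [AddCommGroup M] [Module R M] [Module.Free R M] (hdim : Module.finrank R M = 2)
    (f : M →ₗ[R] M) :
    f ∘ₗ f = LinearMap.trace R M f • f - LinearMap.det f • LinearMap.id := by
  have := Module.finite_of_finrank_eq_succ hdim
  have cayley_hamilton := f.aeval_self_charpoly
  rw [charpoly_of_finrank_eq_two hdim, sub_add, map_sub, sub_eq_zero] at cayley_hamilton
  simp only [map_sub, map_mul, aeval_X, aeval_C, pow_two, Algebra.algebraMap_eq_smul_one,
    smul_mul_assoc, one_mul] at cayley_hamilton
  exact cayley_hamilton

theorem det_eq_one_of_comp_self_eq_neg_id {K V : Type*} [Field K] [AddCommGroup V] [Module K V]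
    (hK : ¬ IsSquare (-1 : K)) (hdim : Module.finrank K V = 2) {J : V →ₗ[K] V}
    (hJ : J ∘ₗ J = -LinearMap.id) : LinearMap.det J = 1 := by
  have : Nontrivial V := Module.nontrivial_of_finrank_pos (R := K) (by lia)
  obtain ⟨v, hv⟩ := exists_ne (0 : V)
  have hJJ : ∀ x, J (J x) = -x := LinearMap.congr_fun hJ
  have trace_smul : LinearMap.trace K V J • J v = (LinearMap.det J - 1) • v := by
    have := LinearMap.congr_fun (comp_self_eq_trace_smul_sub_det_smul_id hdim J) v
    simp only [LinearMap.comp_apply, LinearMap.sub_apply, LinearMap.smul_apply,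
      LinearMap.id_apply, hJJ] at this
    linear_combination (norm := module) -this
  have trace_eq_zero : LinearMap.trace K V J = 0 := by
    by_contra htr
    obtain ⟨c, hc⟩ : ∃ c : K, J v = c • v :=
      ⟨(LinearMap.trace K V J)⁻¹ * (LinearMap.det J - 1), by
        rw [mul_smul, ← trace_smul, inv_smul_smul₀ htr]⟩
    have c_mul_c : (c * c) • v = (-1 : K) • v := by
      rw [mul_smul, ← hc, ← map_smul, ← hc, hJJ, neg_one_smul]
    exact hK ⟨c, (smul_left_injective K hv c_mul_c).symm⟩
  rw [trace_eq_zero, zero_smul] at trace_smul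
  exact sub_eq_zero.mp ((smul_eq_zero.mp trace_smul.symm).resolve_right hv)

end CayleyHamilton

section Symmetric

variable {𝕜 V : Type*} [RCLike 𝕜] [NormedAddCommGroup V] [InnerProductSpace 𝕜 V]
  {S : V →ₗ[𝕜] V}

theorem inner_map_map_of_isSymmetric_of_trace_eq_zero (hdim : Module.finrank 𝕜 V = 2)
    (hsym : S.IsSymmetric) (htr : LinearMap.trace 𝕜 V S = 0) (X Y : V) :
    inner 𝕜 (S X) (S Y) = -LinearMap.det S * inner 𝕜 X Y := by
  have sq : S (S Y) = -LinearMap.det S • Y := by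
    simpa [htr] using LinearMap.congr_fun (comp_self_eq_trace_smul_sub_det_smul_id hdim S) Y
  rw [hsym, sq, inner_smul_right]

theorem det_ne_zero_of_isSymmetric_of_trace_eq_zero (hdim : Module.finrank 𝕜 V = 2)
    (hsym : S.IsSymmetric) (htr : LinearMap.trace 𝕜 V S = 0) (hS0 : S ≠ 0) :
    LinearMap.det S ≠ 0 := by
  intro hdet
  refine hS0 (LinearMap.ext fun X => inner_self_eq_zero (𝕜 := 𝕜) |>.mp ?_)
  rw [inner_map_map_of_isSymmetric_of_trace_eq_zero hdim hsym htr, hdet, neg_zero, zero_mul]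

theorem elliptic_case_J_isometry_general (hdim : Module.finrank 𝕜 V = 2) {J : V →ₗ[𝕜] V}
    (hsym : S.IsSymmetric) (hS0 : S ≠ 0) (htr : LinearMap.trace 𝕜 V S = 0)
    (hsymSJ : (S ∘ₗ J).IsSymmetric) (htrSJ : LinearMap.trace 𝕜 V (S ∘ₗ J) = 0) (X Y : V) :
    inner 𝕜 (J X) (J Y) = LinearMap.det J * inner 𝕜 X Y := by
  have hdet : -LinearMap.det S ≠ 0 :=
    neg_ne_zero.mpr (det_ne_zero_of_isSymmetric_of_trace_eq_zero hdim hsym htr hS0)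
  refine mul_left_cancel₀ hdet ?_
  calc -LinearMap.det S * inner 𝕜 (J X) (J Y)
      = inner 𝕜 (S (J X)) (S (J Y)) :=
        (inner_map_map_of_isSymmetric_of_trace_eq_zero hdim hsym htr (J X) (J Y)).symm
    _ = -LinearMap.det (S ∘ₗ J) * inner 𝕜 X Y :=
        inner_map_map_of_isSymmetric_of_trace_eq_zero hdim hsymSJ htrSJ X Y
    _ = -LinearMap.det S * (LinearMap.det J * inner 𝕜 X Y) := by
        rw [LinearMap.det_comp, neg_mul_eq_neg_mul, mul_assoc]

end Symmetric

theorem elliptic_case_J_isometry {V : Type*} [NormedAddCommGroup V]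
    [InnerProductSpace ℝ V] [FiniteDimensional ℝ V]
    (hdim : Module.finrank ℝ V = 2)
    (S J : V →ₗ[ℝ] V) (hsym : S.IsSymmetric)
    (hS0 : S ≠ 0) (htr : LinearMap.trace ℝ V S = 0)
    (hJ2 : J ∘ₗ J = -LinearMap.id)
    (hsymSJ : (S ∘ₗ J).IsSymmetric)
    (htrSJ : LinearMap.trace ℝ V (S ∘ₗ J) = 0) :
    ∀ X Y : V, ⟪J X, J Y⟫ = ⟪X, Y⟫ := by
  intro X Y
  have hℝ : ¬ IsSquare (-1 : ℝ) := fun h => by linarith [h.nonneg]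
  rw [elliptic_case_J_isometry_general hdim hsym hS0 htr hsymSJ htrSJ,
    det_eq_one_of_comp_self_eq_neg_id hℝ hdim hJ2, one_mul]
end
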